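/- arXiv:1511.02475 — 2 statements merged into one kernel-verified Lean document; each statement's English description precedes it below -/
import Mathlib

section
/- Let G be a connected non-3-edge-colorable simple cubic graph with at most 10 vertices. Then G is isomorphic to the Petersen graph P or to the graph S' obtained from the Petersen graph structure with two triangles (the unique other connected simple cubic graph on 10 vertices with chromatic index 4 arising in this classification). -/
open scoped Classical

/-- A finite undirected multigraph (possibly with loops and parallel edges),
given by a vertex type, an edge type, and an endpoints map. -/
structure Multigraph where
  V : Type
  E : Type
  [fintV : Fintype V]
  [fintE : Fintype E]
  [decV : DecidableEq V]
  [decE : DecidableEq E]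
  ends : E → Sym2 V

namespace Multigraph

attribute [instance] Multigraph.fintV Multigraph.fintE Multigraph.decV Multigraph.decE

variable (G : Multigraph)

/-- The number of times `v` occurs as an endpoint of `e` (2 for a loop at `v`). -/
def incCount (v : G.V) (e : G.E) : ℕ :=
  if G.ends e = Sym2.diag v then 2 else if v ∈ G.ends e then 1 else 0

/-- Degree of a vertex (a loop contributes 2). -/
def degree (v : G.V) : ℕ := ∑ e : G.E, G.incCount v e

/-- The set `∂_G(v)` of edges incident to `v`. -/
def star (v : G.V) : Finset G.E := Finset.univ.filter fun e => v ∈ G.ends e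

/-- No loops. -/
def Loopless : Prop := ∀ e : G.E, ¬ (G.ends e).IsDiag

/-- A cubic graph: loopless and 3-regular (parallel edges allowed). -/
def Cubic : Prop := G.Loopless ∧ ∀ v : G.V, G.degree v = 3

/-- A cubic pseudo-graph: 3-regular, loops and parallel edges allowed. -/
def CubicPseudo : Prop := ∀ v : G.V, G.degree v = 3

/-- A simple graph: no loops and no parallel edges. -/
def Simple : Prop := G.Loopless ∧ ∀ e e' : G.E, G.ends e = G.ends e' → e = e'

/-- Two edges are adjacent if they are distinct and share an endpoint. -/
def EdgeAdj (e e' : G.E) : Prop :=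
  e ≠ e' ∧ ∃ v : G.V, v ∈ G.ends e ∧ v ∈ G.ends e'

/-- A matching: a set of pairwise non-adjacent edges. -/
def IsMatching (M : Set G.E) : Prop :=
  ∀ e ∈ M, ∀ e' ∈ M, e ≠ e' → ¬ ∃ v : G.V, v ∈ G.ends e ∧ v ∈ G.ends e'

/-- A perfect matching: a matching covering every vertex. -/
def IsPerfectMatching (M : Set G.E) : Prop :=
  G.IsMatching M ∧ ∀ v : G.V, ∃ e ∈ M, v ∈ G.ends e

/-- Degree of `v` within the spanning subgraph with edge set `A`. -/
noncomputable def degIn (A : Set G.E) (v : G.V) : ℕ :=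
  ∑ e : G.E, if e ∈ A then G.incCount v e else 0

/-- `A` is the edge set of a `k`-factor: a spanning `k`-regular subgraph. -/
def IsKFactor (k : ℕ) (A : Set G.E) : Prop := ∀ v : G.V, G.degIn A v = k

/-- `A` is the edge set of an even subgraph. -/
def EvenSubgraph (A : Set G.E) : Prop := ∀ v : G.V, Even (G.degIn A v)

/-- Reachability using only edges from `A`. -/
def Reach (A : Set G.E) : G.V → G.V → Prop :=
  Relation.ReflTransGen fun a b => ∃ e ∈ A, G.ends e = s(a, b)

/-- Connectedness. -/
def Connected : Prop := ∀ u v : G.V, G.Reach Set.univ u v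

/-- A bridge: an edge whose removal disconnects its endpoints. -/
def IsBridge (e : G.E) : Prop :=
  ∀ u w : G.V, G.ends e = s(u, w) → ¬ G.Reach {e' | e' ≠ e} u w

/-- The chromatic index: least number of colors of a proper edge coloring. -/
noncomputable def chromaticIndex : ℕ :=
  sInf {n | ∃ c : G.E → Fin n, ∀ e e', G.EdgeAdj e e' → c e ≠ c e'}

/-- A triangle on distinct vertices `u, v, w` with edges `e₁, e₂, e₃`. -/
def IsTriangle (e₁ e₂ e₃ : G.E) (u v w : G.V) : Prop :=
  u ≠ v ∧ v ≠ w ∧ u ≠ w ∧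
    G.ends e₁ = s(u, v) ∧ G.ends e₂ = s(v, w) ∧ G.ends e₃ = s(u, w)

/-- Triangle-freeness. -/
def TriangleFree : Prop :=
  ¬ ∃ (e₁ e₂ e₃ : G.E) (u v w : G.V), G.IsTriangle e₁ e₂ e₃ u v w

/-- An isomorphism of multigraphs. -/
structure Iso (G H : Multigraph) where
  vEquiv : G.V ≃ H.V
  eEquiv : G.E ≃ H.E
  ends_map : ∀ e : G.E, H.ends (eEquiv e) = (G.ends e).map vEquiv

/-- `G` and `H` are isomorphic. -/
def IsIsomorphicTo (G H : Multigraph) : Prop := Nonempty (Iso G H)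

/-- An `H`-coloring of `G`: `f(∂_G(x)) = ∂_H(y)` for every vertex `x` of `G`,
some vertex `y` of `H`. -/
def IsHColoring (G H : Multigraph) (f : G.E → H.E) : Prop :=
  ∀ x : G.V, ∃ y : H.V, (G.star x).image f = H.star y

/-- The set `V(f)` of vertices of `G` satisfying the `H`-coloring condition under `f`. -/
def colVerts (G H : Multigraph) (f : G.E → H.E) : Set G.V :=
  {x : G.V | ∃ y : H.V, (G.star x).image f = H.star y}

/-- The incidence multiset of a vertex: each incident edge with its multiplicity
(a loop occurs twice). -/
noncomputable def incMultiset (v : G.V) : Multiset G.E :=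
  ∑ e : G.E, (G.incCount v e) • ({e} : Multiset G.E)

end Multigraph

/-- The Petersen graph. -/
def Petersen : Multigraph where
  V := Fin 10
  E := {p : Sym2 (Fin 10) //
    p ∈ ({s(0,1), s(1,2), s(2,3), s(3,4), s(4,0),
          s(0,5), s(1,6), s(2,7), s(3,8), s(4,9),
          s(5,7), s(7,9), s(9,6), s(6,8), s(8,5)} : Finset (Sym2 (Fin 10)))}
  ends := Subtype.val

/-- The Sylvester graph `S` on 10 vertices: a central vertex 0 joined by three
bridges to three end-blocks; each end-block is a 3-vertex multigraph whose two
non-root vertices are joined by a pair of parallel edges. -/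
def SylvesterS : Multigraph where
  V := Fin 10
  E := Fin 15
  ends := ![s(0,1), s(1,2), s(1,3), s(2,3), s(2,3),
            s(0,4), s(4,5), s(4,6), s(5,6), s(5,6),
            s(0,7), s(7,8), s(7,9), s(8,9), s(8,9)]

/-- The Sylvester simple graph `S₁₆` on 16 vertices: central vertex 0 joined by
bridges to three 5-vertex end-blocks with edges
(v1,v2),(v1,v3),(v1,v4),(v2,v3),(v2,v4),(v3,v5),(v4,v5). -/
def Sylvester16 : Multigraph where
  V := Fin 16
  E := {p : Sym2 (Fin 16) //
    p ∈ ({s(1,2), s(1,3), s(1,4), s(2,3), s(2,4), s(3,5), s(4,5), s(0,5),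
          s(6,7), s(6,8), s(6,9), s(7,8), s(7,9), s(8,10), s(9,10), s(0,10),
          s(11,12), s(11,13), s(11,14), s(12,13), s(12,14), s(13,15), s(14,15),
          s(0,15)} : Finset (Sym2 (Fin 16)))}
  ends := Subtype.val

/-- The graph `S'` on 10 vertices: two 5-vertex blocks, each consisting of a
triangle v1v2v3 together with edges (v1,v4),(v2,v4),(v3,v5),(v4,v5), joined by
a bridge between the two degree-2 vertices. -/
def Sprime : Multigraph where
  V := Fin 10
  E := {p : Sym2 (Fin 10) //
    p ∈ ({s(0,1), s(0,2), s(1,2), s(0,3), s(1,3), s(2,4), s(3,4),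
          s(5,6), s(5,7), s(6,7), s(5,8), s(6,8), s(7,9), s(8,9),
          s(4,9)} : Finset (Sym2 (Fin 10)))}
  ends := Subtype.val

/-- The Sylvester pseudo-graph `S₄` on 4 vertices: a central vertex 0 joined to
vertices 1, 2, 3 (edges `a = 0`, `b = 1`, `c = 2`), each of which carries a loop
(`a' = 3`, `b' = 4`, `c' = 5`). -/
def S4 : Multigraph where
  V := Fin 4
  E := Fin 6
  ends := ![s(0,1), s(0,2), s(0,3), s(1,1), s(2,2), s(3,3)]

/-!
A cubic graph can be rebuilt by treating its vertices one after the other and saturating each before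
moving on to the next: the missing neighbors of the current vertex are either new vertices, which
may be numbered consecutively, or later vertices that are not yet saturated. For at most ten
vertices the resulting tree of partial graphs is small enough to be exhausted by computation. Each
complete graph found there either is `3`-edge-colored by backtracking or has ten vertices, and then
backtracking produces an isomorphism with the Petersen graph or with `S'`.
-/

section Backtracking

variable {α β : Type*}

/-- Backtracking search for a function from the list `as` to the list `dom` whose graph, together
with the assignments in `done`, satisfies the constraint `R` pairwise. -/
def assignable (R : α × β → α × β → Bool) (dom : List β) : List α → List (α × β) → Bool
  | [], _ => true
  | a :: as, done =>
    dom.any fun b => done.all (R (a, b)) && assignable R dom as ((a, b) :: done)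

theorem exists_assignment_of_assignable [Nonempty β] {R : α × β → α × β → Bool}
    (hR : ∀ x y, R x y → R y x) {dom : List β} {as : List α} {done : List (α × β)}
    (h : assignable R dom as done) :
    ∃ f : α → β, (∀ a ∈ as, ∀ p ∈ done, R (a, f a) p) ∧
      ∀ a ∈ as, ∀ a' ∈ as, a ≠ a' → R (a, f a) (a', f a') := by
  induction as generalizing done with
  | nil => exact ⟨fun _ => Classical.arbitrary β, by simp⟩
  | cons a as ih =>
    simp only [assignable, List.any_eq_true, Bool.and_eq_true, List.all_eq_true] at h
    obtain ⟨b, -, hdone, h⟩ := h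
    obtain ⟨f, hf, hff⟩ := ih h
    simp only [List.forall_mem_cons] at hf
    by_cases ha : a ∈ as
    · refine ⟨f, ?_, ?_⟩ <;> grind
    · refine ⟨Function.update f a b, ?_, ?_⟩ <;> grind

/-- Backtracking search for an isomorphism between two graphs with `n` vertices. -/
def isoSearch {n : ℕ} (G H : SimpleGraph (Fin n)) [DecidableRel G.Adj] [DecidableRel H.Adj] :
    Bool :=
  assignable (fun x y => decide (x.2 ≠ y.2 ∧ (G.Adj x.1 y.1 ↔ H.Adj x.2 y.2)))
    (List.finRange n) (List.finRange n) []

theorem nonempty_iso_of_isoSearch {n : ℕ} [NeZero n] {G H : SimpleGraph (Fin n)}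
    [DecidableRel G.Adj] [DecidableRel H.Adj] (h : isoSearch G H) : Nonempty (G ≃g H) := by
  obtain ⟨f, -, hf⟩ := exists_assignment_of_assignable
    (by simp only [decide_eq_true_eq, G.adj_comm, H.adj_comm]; tauto) h
  simp only [List.mem_finRange, decide_eq_true_eq, true_imp_iff] at hf
  have hinj : Function.Injective f := fun a b hab => by_contra fun hne => (hf a b hne).1 hab
  refine ⟨Equiv.ofBijective f hinj.bijective_of_finite, fun {a b} => ?_⟩
  rcases eq_or_ne a b with rfl | hne
  · simp
  · exact (hf a b hne).2.symm

end Backtracking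

/-- A list of pairs of natural numbers, each standing for an undirected edge. -/
abbrev EdgeList := List (ℕ × ℕ)

namespace EdgeList

variable {es es' : EdgeList} {a b x y : ℕ}

/-- The neighbors of the vertex `a`, listed with multiplicity. -/
def nbrs (es : EdgeList) (a : ℕ) : List ℕ :=
  es.filterMap fun p => if p.1 = a then some p.2 else if p.2 = a then some p.1 else none

theorem mem_nbrs : b ∈ nbrs es a ↔ (a, b) ∈ es ∨ (b, a) ∈ es := by
  simp only [nbrs, List.mem_filterMap, Prod.exists]
  grind

theorem mem_nbrs_comm : b ∈ nbrs es a ↔ a ∈ nbrs es b := by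
  simp only [mem_nbrs, or_comm]

theorem mem_nbrs_cons :
    b ∈ nbrs ((x, y) :: es) a ↔ a = x ∧ b = y ∨ b = x ∧ a = y ∨ b ∈ nbrs es a := by
  simp only [mem_nbrs, List.mem_cons, Prod.mk.injEq]
  tauto

theorem nodup_nbrs_cons (h : (nbrs es a).Nodup) (hxy : y ∉ nbrs es x) :
    (nbrs ((x, y) :: es) a).Nodup := by
  have hyx : x ∉ nbrs es y := mt mem_nbrs_comm.1 hxy
  grind [nbrs]

theorem length_nbrs_le_of_sublist (h : es.Sublist es') (a : ℕ) :
    (nbrs es a).length ≤ (nbrs es' a).length :=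
  (h.filterMap _).length_le

theorem length_nbrs_map_append (ys : List ℕ) :
    (nbrs (ys.map (x, ·) ++ es) x).length = ys.length + (nbrs es x).length := by
  simp [nbrs]

/-- The simple graph on `0, …, k - 1` with the given edges. -/
def graph (es : EdgeList) (k : ℕ) : SimpleGraph (Fin k) where
  Adj a b := a ≠ b ∧ (b : ℕ) ∈ es.nbrs a
  symm := ⟨fun _ _ h => ⟨h.1.symm, mem_nbrs_comm.1 h.2⟩⟩
  loopless := ⟨fun _ h => h.1 rfl⟩

instance (k : ℕ) : DecidableRel (es.graph k).Adj :=
  fun a b => inferInstanceAs (Decidable (a ≠ b ∧ (b : ℕ) ∈ es.nbrs a))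

/-- Backtracking search for a proper edge coloring with `n` colors. -/
def edgeColoringSearch (es : EdgeList) (n : ℕ) : Bool :=
  assignable (fun x y => x.2 != y.2 ||
    !(x.1.1 == y.1.1 || x.1.1 == y.1.2 || x.1.2 == y.1.1 || x.1.2 == y.1.2))
    (List.finRange n) es.reverse []

theorem exists_mem_of_mem_edgeSet {k : ℕ} {e : Sym2 (Fin k)} (he : e ∈ (es.graph k).edgeSet) :
    ∃ p ∈ es, e.map Fin.val = s(p.1, p.2) := by
  induction e with | _ a b
  rcases mem_nbrs.1 he.2 with h | h
  · exact ⟨_, h, rfl⟩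
  · exact ⟨_, h, Sym2.eq_swap⟩

theorem lineGraph_colorable_of_edgeColoringSearch {n : ℕ} [NeZero n]
    (h : edgeColoringSearch es n) (k : ℕ) : (es.graph k).lineGraph.Colorable n := by
  obtain ⟨c, -, hc⟩ := exists_assignment_of_assignable (by grind) h
  choose p hp hpe using fun e : (es.graph k).edgeSet => exists_mem_of_mem_edgeSet e.2
  refine ⟨fun e => c (p e), fun {e e'} hadj hcol => ?_⟩
  obtain ⟨hne, v, hv, hv'⟩ := SimpleGraph.lineGraph_adj_iff_exists.1 hadj
  have hpne : p e ≠ p e' := fun heq => hne <| Subtype.ext <|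
    Sym2.map.injective Fin.val_injective <| by rw [hpe, hpe, heq]
  have hpv : (v : ℕ) ∈ s((p e).1, (p e).2) := hpe e ▸ Sym2.mem_map.2 ⟨v, hv, rfl⟩
  have hpv' : (v : ℕ) ∈ s((p e').1, (p e').2) := hpe e' ▸ Sym2.mem_map.2 ⟨v, hv', rfl⟩
  have := hc _ (List.mem_reverse.2 (hp e)) _ (List.mem_reverse.2 (hp e')) hpne
  grind

/-- The vertices `0, …, k - 1` are placed at distinct vertices of `A` by `f`, and `es` lists,
without repetition, some of the edges of `A` between the vertices placed so far. The values of
`f` from `k` on play no role. -/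
structure IsLabelling {V : Type*} (A : SimpleGraph V) (f : ℕ → V) (k : ℕ) (es : EdgeList) :
    Prop where
  injOn : Set.InjOn f (Set.Iio k)
  edge : ∀ a, ∀ b ∈ nbrs es a, a < k ∧ b < k ∧ A.Adj (f a) (f b)
  nodup : ∀ a, (nbrs es a).Nodup

namespace IsLabelling

variable {V : Type*} {A : SimpleGraph V} {f : ℕ → V} {k d : ℕ}

theorem le_card [Fintype V] (hl : IsLabelling A f k es) : k ≤ Fintype.card V := by
  rw [← Fintype.card_fin k]
  exact Fintype.card_le_of_injective (fun a : Fin k => f a)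
    fun a b hab => Fin.ext (hl.injOn a.2 b.2 hab)

theorem add_vertex (hl : IsLabelling A f k es) {w : V} (hw : ∀ a < k, f a ≠ w) :
    IsLabelling A (Function.update f k w) (k + 1) es where
  injOn a ha b hb hab := by
    have := @hl.injOn a
    grind
  edge a b hb := by
    have := hl.edge a b hb
    grind
  nodup := hl.nodup

theorem add_edge (hl : IsLabelling A f k es) (hx : x < k) (hy : y < k)
    (hadj : A.Adj (f x) (f y)) (hxy : y ∉ nbrs es x) : IsLabelling A f k ((x, y) :: es) where
  injOn := hl.injOn
  edge a b hb := by
    rcases mem_nbrs_cons.1 hb with ⟨rfl, rfl⟩ | ⟨rfl, rfl⟩ | hb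
    · exact ⟨hx, hy, hadj⟩
    · exact ⟨hy, hx, hadj.symm⟩
    · exact hl.edge a b hb
  nodup a := nodup_nbrs_cons (hl.nodup a) hxy

theorem add_edges (hl : IsLabelling A f k es) (hx : x < k) {ys : List ℕ} (hnd : ys.Nodup)
    (hys : ∀ y ∈ ys, y < k ∧ A.Adj (f x) (f y) ∧ y ∉ nbrs es x) :
    IsLabelling A f k (ys.map (x, ·) ++ es) := by
  induction ys with
  | nil => exact hl
  | cons y ys ih =>
    obtain ⟨⟨hy, hadj, hyx⟩, hys⟩ := List.forall_mem_cons.1 hys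
    obtain ⟨hnot, hnd⟩ := List.nodup_cons.1 hnd
    refine (ih hnd hys).add_edge hx hy hadj fun hmem => ?_
    have hxy : x ≠ y := fun h => hadj.ne (congrArg f h)
    simp only [mem_nbrs, List.mem_append, List.mem_map, Prod.mk.injEq] at hmem hyx
    grind

theorem add_new_neighbor (hl : IsLabelling A f k es) (hx : x < k) {w : V}
    (hadj : A.Adj (f x) w) (hw : ∀ a < k, f a ≠ w) :
    IsLabelling A (Function.update f k w) (k + 1) ((x, k) :: es) := by
  refine (hl.add_vertex hw).add_edge (by omega) (by omega) ?_
    fun hmem => (hl.edge _ _ hmem).2.1.false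
  rwa [Function.update_of_ne hx.ne, Function.update_self]

theorem card_map_nbrs (hl : IsLabelling A f k es) (a : ℕ) :
    ((nbrs es a).map f).toFinset.card = (nbrs es a).length := by
  rw [List.toFinset_card_of_nodup, List.length_map]
  exact (hl.nodup a).map_on fun b hb c hc =>
    hl.injOn (hl.edge a b hb).2.1 (hl.edge a c hc).2.1

variable [A.LocallyFinite]

theorem map_nbrs_subset (hl : IsLabelling A f k es) (a : ℕ) :
    ((nbrs es a).map f).toFinset ⊆ A.neighborFinset (f a) := by
  intro w hw
  obtain ⟨b, hb, rfl⟩ := List.mem_map.1 (List.mem_toFinset.1 hw)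
  exact (A.mem_neighborFinset _ _).2 (hl.edge a b hb).2.2

theorem length_nbrs_le_degree (hl : IsLabelling A f k es) (a : ℕ) :
    (nbrs es a).length ≤ A.degree (f a) :=
  hl.card_map_nbrs a ▸ Finset.card_le_card (hl.map_nbrs_subset a)

theorem degree_le_length_nbrs_iff (hl : IsLabelling A f k es) (a : ℕ) :
    A.degree (f a) ≤ (nbrs es a).length ↔ ∀ w, A.Adj (f a) w → ∃ b ∈ nbrs es a, f b = w := by
  have hclosed : (∀ w, A.Adj (f a) w → ∃ b ∈ nbrs es a, f b = w) ↔
      A.neighborFinset (f a) ⊆ ((nbrs es a).map f).toFinset := by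
    simp [Finset.subset_iff]
  rw [hclosed, ← hl.card_map_nbrs a]
  exact ⟨fun h => (Finset.eq_of_subset_of_card_le (hl.map_nbrs_subset a) h).ge,
    Finset.card_le_card⟩

theorem nonempty_iso (hl : IsLabelling A f k es)
    (hfull : ∀ a < k, A.degree (f a) ≤ (nbrs es a).length) (hsurj : ∀ v, ∃ a < k, f a = v) :
    Nonempty (A ≃g es.graph k) := by
  have hbij : Function.Bijective fun a : Fin k => f a :=
    ⟨fun a b hab => Fin.ext (hl.injOn a.2 b.2 hab),
      fun v => let ⟨a, ha, hav⟩ := hsurj v; ⟨⟨a, ha⟩, hav⟩⟩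
  refine ⟨RelIso.symm ⟨Equiv.ofBijective _ hbij, fun {a b} => ⟨fun hadj => ?_, fun hab => ?_⟩⟩⟩
  · obtain ⟨c, hc, hcb⟩ := (hl.degree_le_length_nbrs_iff a).1 (hfull a a.2) _ hadj
    obtain rfl := hl.injOn (hl.edge a c hc).2.1 b.2 hcb
    exact ⟨fun h => hadj.ne (congrArg _ h), hc⟩
  · exact (hl.edge a b hab.2).2.2

end IsLabelling

/-- The later vertices to which the vertex `i` may still be joined in a graph of maximum degree
at most `d` on `0, …, k - 1`. -/
def candidates (es : EdgeList) (d i k : ℕ) : List ℕ :=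
  (List.range k).filter fun j => i < j && (es.nbrs j).length < d && j ∉ es.nbrs i

/-- Exhaustive exploration of the `d`-regular graphs with at most `N` vertices: every completion of
the partial graph with vertices `0, …, k - 1` and edges `es` in which the vertices below `i` are
saturated passes the test `accept`. The first argument bounds the depth of the recursion; the result
is `false` if it is exceeded.

The neighbors of `i` outside the partial graph are added first, one at a time; once there are none
left, the remaining ones are chosen all at once among the candidates. When all vertices are
saturated, either the graph is complete or a new component is started. -/
def regularSearch (d N : ℕ) (accept : ℕ → EdgeList → Bool) : ℕ → ℕ → ℕ → EdgeList → Bool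
  | 0, _, _, _ => false
  | n + 1, i, k, es =>
    if k ≤ i then accept k es && (N ≤ k || regularSearch d N accept n i (k + 1) es)
    else if d ≤ (es.nbrs i).length then regularSearch d N accept n (i + 1) k es
    else
      (N ≤ k || regularSearch d N accept n i (k + 1) ((i, k) :: es)) &&
        ((es.candidates d i k).sublistsLen (d - (es.nbrs i).length)).all fun ys =>
          regularSearch d N accept n i k (ys.map (i, ·) ++ es)

section Search

variable {V : Type*} {A : SimpleGraph V} [A.LocallyFinite] {f : ℕ → V} {d i k : ℕ}

theorem IsLabelling.mem_candidates (hl : IsLabelling A f k es) (hA : A.IsRegularOfDegree d)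
    (hfull : ∀ a < i, d ≤ (es.nbrs a).length) {j : ℕ} (hj : j < k) (hadj : A.Adj (f i) (f j))
    (hji : j ∉ es.nbrs i) (hi : i < k) : j ∈ es.candidates d i k := by
  have hlt : (es.nbrs j).length < d := by
    by_contra! hle
    obtain ⟨b, hb, hbi⟩ :=
      (hl.degree_le_length_nbrs_iff j).1 (by rwa [hA.degree_eq]) _ hadj.symm
    obtain rfl := hl.injOn (hl.edge j b hb).2.1 hi hbi
    exact hji (mem_nbrs_comm.1 hb)
  have hij : i ≠ j := fun h => hadj.ne (congrArg f h)
  have hle : i ≤ j := not_lt.1 fun h => (hfull j h).not_gt hlt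
  simp [candidates, hj, hlt, hji, hle.lt_of_ne hij]

theorem IsLabelling.exists_saturating_sublist (hl : IsLabelling A f k es)
    (hA : A.IsRegularOfDegree d) (hfull : ∀ a < i, d ≤ (es.nbrs a).length) (hi : i < k)
    (hold : ∀ w, A.Adj (f i) w → ∃ a < k, f a = w) :
    ∃ ys ∈ (es.candidates d i k).sublistsLen (d - (es.nbrs i).length),
      IsLabelling A f k (ys.map (i, ·) ++ es) := by
  let ys := (es.candidates d i k).filter fun j => A.Adj (f i) (f j)
  have hys : ∀ j ∈ ys, j < k ∧ A.Adj (f i) (f j) ∧ j ∉ es.nbrs i := by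
    simp +contextual [ys, candidates]
  have hl' : IsLabelling A f k (ys.map (i, ·) ++ es) :=
    hl.add_edges hi ((List.nodup_range.filter _).filter _) hys
  have hge : d ≤ (nbrs (ys.map (i, ·) ++ es) i).length := by
    rw [← hA.degree_eq (f i), hl'.degree_le_length_nbrs_iff]
    intro w hw
    obtain ⟨j, hj, rfl⟩ := hold w hw
    refine ⟨j, ?_, rfl⟩
    by_cases hji : j ∈ es.nbrs i
    · exact mem_nbrs.2 ((mem_nbrs.1 hji).imp (List.mem_append_right _) (List.mem_append_right _))
    · have hjys : j ∈ ys :=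
        List.mem_filter.2 ⟨hl.mem_candidates hA hfull hj hw hji hi, decide_eq_true hw⟩
      exact mem_nbrs.2 (.inl (List.mem_append_left _ (List.mem_map_of_mem hjys)))
  have hle := hl'.length_nbrs_le_degree i
  rw [hA.degree_eq, length_nbrs_map_append] at hle
  rw [length_nbrs_map_append] at hge
  exact ⟨ys, List.mem_sublistsLen.2 ⟨List.filter_sublist, by omega⟩, hl'⟩

theorem exists_iso_of_regularSearch [Fintype V] {N : ℕ} {accept : ℕ → EdgeList → Bool}
    (hA : A.IsRegularOfDegree d) (hN : Fintype.card V ≤ N) {n : ℕ}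
    (h : regularSearch d N accept n i k es) (hl : IsLabelling A f k es)
    (hfull : ∀ a < i, d ≤ (es.nbrs a).length) :
    ∃ k es, accept k es ∧ Nonempty (A ≃g graph es k) := by
  induction n generalizing i k es f with
  | zero => simp [regularSearch] at h
  | succ n ih =>
    rw [regularSearch] at h
    split_ifs at h with hki hsat
    · obtain ⟨haccept, hnew⟩ := Bool.and_eq_true_iff.1 h
      by_cases hsurj : ∀ v, ∃ a < k, f a = v
      · exact ⟨k, es, haccept, hl.nonempty_iso
          (fun a ha => hA.degree_eq (f a) ▸ hfull a (ha.trans_le hki)) hsurj⟩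
      · push Not at hsurj
        obtain ⟨w, hw⟩ := hsurj
        have hl' := hl.add_vertex hw
        have hkN : ¬ N ≤ k := by have := hl'.le_card; omega
        exact ih (by simpa [hkN] using hnew) hl' hfull
    · exact ih h hl fun a ha => by grind
    · rw [not_le] at hki
      obtain ⟨hnew, hold⟩ := Bool.and_eq_true_iff.1 h
      by_cases hw : ∃ w, A.Adj (f i) w ∧ ∀ a < k, f a ≠ w
      · obtain ⟨w, hadj, hw⟩ := hw
        have hl' := hl.add_new_neighbor hki hadj hw
        have hkN : ¬ N ≤ k := by have := hl'.le_card; omega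
        exact ih (by simpa [hkN] using hnew) hl' fun a ha =>
          (hfull a ha).trans (length_nbrs_le_of_sublist (List.sublist_cons_self _ _) a)
      · push Not at hw
        obtain ⟨ys, hys, hl'⟩ := hl.exists_saturating_sublist hA hfull hki hw
        exact ih (List.all_eq_true.1 hold ys hys) hl' fun a ha =>
          (hfull a ha).trans (length_nbrs_le_of_sublist (List.sublist_append_right _ _) a)

end Search

end EdgeList

namespace Multigraph

variable {G H : Multigraph}

/-- The graph of adjacent distinct vertices of a multigraph. -/
def toSimpleGraph (G : Multigraph) : SimpleGraph G.V :=
  SimpleGraph.fromEdgeSet (Set.range G.ends)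

theorem Loopless.edgeSet_toSimpleGraph (hG : G.Loopless) :
    G.toSimpleGraph.edgeSet = Set.range G.ends := by
  rw [toSimpleGraph, SimpleGraph.edgeSet_fromEdgeSet, sdiff_eq_left, Set.disjoint_left]
  rintro _ ⟨e, rfl⟩
  exact hG e

theorem Simple.ends_injective (hG : G.Simple) : Function.Injective G.ends :=
  hG.2

theorem Loopless.incCount_eq (hG : G.Loopless) (v : G.V) (e : G.E) :
    G.incCount v e = if v ∈ G.ends e then 1 else 0 :=
  if_neg fun h => hG e (by rw [h]; exact Sym2.diag_isDiag v)

/-- The edges of a simple multigraph are those of its simple graph. -/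
noncomputable def Simple.edgeEquiv (hG : G.Simple) : G.E ≃ G.toSimpleGraph.edgeSet :=
  (Equiv.ofInjective G.ends hG.ends_injective).trans
    (Equiv.setCongr hG.1.edgeSet_toSimpleGraph.symm)

@[simp]
theorem Simple.coe_edgeEquiv (hG : G.Simple) (e : G.E) : (hG.edgeEquiv e : Sym2 G.V) = G.ends e :=
  rfl

@[simp]
theorem Simple.ends_edgeEquiv_symm (hG : G.Simple) (e : G.toSimpleGraph.edgeSet) :
    G.ends (hG.edgeEquiv.symm e) = e := by
  rw [← hG.coe_edgeEquiv, Equiv.apply_symm_apply]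

theorem Simple.degree_toSimpleGraph (hG : G.Simple) (v : G.V) :
    G.toSimpleGraph.degree v = G.degree v := by
  have hfilter : (Finset.univ.filter (v ∈ G.ends ·)).map ⟨G.ends, hG.ends_injective⟩ =
      G.toSimpleGraph.incidenceFinset v := by
    ext e
    simp only [Finset.mem_map, Finset.mem_filter_univ, Function.Embedding.coeFn_mk,
      SimpleGraph.mem_incidenceFinset, SimpleGraph.incidenceSet, hG.1.edgeSet_toSimpleGraph,
      Set.mem_ofPred_eq, Set.mem_range]
    grind
  simp only [degree, hG.1.incCount_eq, Finset.sum_boole, Nat.cast_id]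
  rw [← SimpleGraph.card_incidenceFinset_eq_degree, ← hfilter, Finset.card_map]

theorem Simple.isIsomorphicTo_of_iso (hG : G.Simple) (hH : H.Simple)
    (φ : G.toSimpleGraph ≃g H.toSimpleGraph) : G.IsIsomorphicTo H :=
  ⟨⟨φ.toEquiv, hG.edgeEquiv.trans (φ.mapEdgeSet.trans hH.edgeEquiv.symm), fun e => by simp⟩⟩

theorem Simple.exists_edge_coloring_of_lineGraph_colorable (hG : G.Simple) {n : ℕ}
    (h : G.toSimpleGraph.lineGraph.Colorable n) :
    ∃ c : G.E → Fin n, ∀ e e', G.EdgeAdj e e' → c e ≠ c e' := by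
  obtain ⟨C⟩ := h
  refine ⟨fun e => C (hG.edgeEquiv e), fun e e' ⟨hne, hshare⟩ => C.valid ?_⟩
  exact SimpleGraph.lineGraph_adj_iff_exists.2 ⟨hG.edgeEquiv.injective.ne hne, hshare⟩

theorem toSimpleGraph_adj {a b : G.V} :
    G.toSimpleGraph.Adj a b ↔ (∃ e, G.ends e = s(a, b)) ∧ a ≠ b :=
  SimpleGraph.fromEdgeSet_adj _

end Multigraph

theorem Petersen.simple : Petersen.Simple :=
  ⟨by unfold Multigraph.Loopless; decide, fun _ _ => Subtype.ext⟩

theorem Sprime.simple : Sprime.Simple :=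
  ⟨by unfold Multigraph.Loopless; decide, fun _ _ => Subtype.ext⟩

/-- The edges of `Petersen`, as an edge list. -/
def petersenEdges : EdgeList :=
  [(0, 1), (1, 2), (2, 3), (3, 4), (4, 0), (0, 5), (1, 6), (2, 7), (3, 8), (4, 9),
    (5, 7), (7, 9), (9, 6), (6, 8), (8, 5)]

/-- The edges of `Sprime`, as an edge list. -/
def sprimeEdges : EdgeList :=
  [(0, 1), (0, 2), (1, 2), (0, 3), (1, 3), (2, 4), (3, 4),
    (5, 6), (5, 7), (6, 7), (5, 8), (6, 8), (7, 9), (8, 9), (4, 9)]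

theorem nonempty_graph_petersenEdges_iso :
    Nonempty (petersenEdges.graph 10 ≃g Petersen.toSimpleGraph) :=
  ⟨Equiv.refl (Fin 10), by simp only [Multigraph.toSimpleGraph_adj]; decide +kernel⟩

theorem nonempty_graph_sprimeEdges_iso :
    Nonempty (sprimeEdges.graph 10 ≃g Sprime.toSimpleGraph) :=
  ⟨Equiv.refl (Fin 10), by simp only [Multigraph.toSimpleGraph_adj]; decide +kernel⟩

/-- The test for `regularSearch`: the graph on `0, …, k - 1` with edges `es` is found to be
`3`-edge-colorable, or isomorphic to the Petersen graph or to `S'`. -/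
def colorableOrExceptional (k : ℕ) (es : EdgeList) : Bool :=
  es.edgeColoringSearch 3 || k == 10 &&
    (isoSearch (es.graph 10) (petersenEdges.graph 10) ||
      isoSearch (es.graph 10) (sprimeEdges.graph 10))

/-- The bound `31` on the depth suffices: each of the ten vertices is added once, has its last
neighbors chosen at most once, and is passed over once. -/
theorem regularSearch_colorableOrExceptional :
    EdgeList.regularSearch 3 10 colorableOrExceptional 31 0 0 [] := by
  decide +kernel

theorem lineGraph_colorable_or_nonempty_iso {V : Type*} [Fintype V] {A : SimpleGraph V}
    (hA : A.IsRegularOfDegree 3) (hcard : Fintype.card V ≤ 10) :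
    A.lineGraph.Colorable 3 ∨ Nonempty (A ≃g petersenEdges.graph 10) ∨
      Nonempty (A ≃g sprimeEdges.graph 10) := by
  cases isEmpty_or_nonempty V
  · exact .inl (.of_isEmpty _)
  have hl : EdgeList.IsLabelling A (fun _ => Classical.arbitrary V) 0 [] :=
    ⟨by simp, by simp [EdgeList.nbrs], by simp [EdgeList.nbrs]⟩
  obtain ⟨k, es, haccept, ⟨φ⟩⟩ :=
    EdgeList.exists_iso_of_regularSearch hA hcard regularSearch_colorableOrExceptional hl (by simp)
  simp only [colorableOrExceptional, Bool.or_eq_true, Bool.and_eq_true, beq_iff_eq] at haccept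
  obtain hcol | ⟨rfl, hiso⟩ := haccept
  · exact .inl ((EdgeList.lineGraph_colorable_of_edgeColoringSearch hcol k).of_hom φ.lineGraph)
  · exact .inr <| hiso.imp (fun h => (nonempty_iso_of_isoSearch h).map φ.trans)
      fun h => (nonempty_iso_of_isoSearch h).map φ.trans

theorem non_three_edge_colorable_le_ten_is_petersen_or_sprime_general (G : Multigraph)
    (hs : G.Simple) (hc : G.Cubic)
    (hnc : ¬ ∃ c : G.E → Fin 3, ∀ e e', G.EdgeAdj e e' → c e ≠ c e')
    (hcard : Fintype.card G.V ≤ 10) :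
    Multigraph.IsIsomorphicTo G Petersen ∨ Multigraph.IsIsomorphicTo G Sprime := by
  have hreg : G.toSimpleGraph.IsRegularOfDegree 3 := fun v => by
    rw [hs.degree_toSimpleGraph, hc.2]
  obtain ⟨ψ⟩ := nonempty_graph_petersenEdges_iso
  obtain ⟨ψ'⟩ := nonempty_graph_sprimeEdges_iso
  rcases lineGraph_colorable_or_nonempty_iso hreg hcard with h | ⟨⟨φ⟩⟩ | ⟨⟨φ⟩⟩
  · exact absurd (hs.exists_edge_coloring_of_lineGraph_colorable h) hnc
  · exact .inl (hs.isIsomorphicTo_of_iso Petersen.simple (φ.trans ψ))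
  · exact .inr (hs.isIsomorphicTo_of_iso Sprime.simple (φ.trans ψ'))

/-- a connected non-3-edge-colorable simple cubic graph on at
most 10 vertices is the Petersen graph or the graph S'. -/
theorem non_three_edge_colorable_le_ten_is_petersen_or_sprime (G : Multigraph)
    (hconn : G.Connected) (hs : G.Simple) (hc : G.Cubic)
    (hnc : ¬ ∃ c : G.E → Fin 3, ∀ e e', G.EdgeAdj e e' → c e ≠ c e')
    (hcard : Fintype.card G.V ≤ 10) :
    Multigraph.IsIsomorphicTo G Petersen ∨ Multigraph.IsIsomorphicTo G Sprime :=
  non_three_edge_colorable_le_ten_is_petersen_or_sprime_general G hs hc hnc hcard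
end

section
/- Every cubic pseudo-graph G admits an S_4-coloring, where S_4 is the pseudo-graph on 4 vertices consisting of a central vertex joined by three edges a, b, c to three vertices, each of which carries a loop (loops a', b', c'). Here an S_4-coloring assigns to each edge of G an edge of S_4 (loops receive two colors in the sense that a loop used at a vertex of G appears twice in its neighborhood), such that for every vertex x of G, the multiset of colors on ∂_G(x) equals the multiset of edges at some vertex of S_4 (i.e., either {a,b,c} at the central vertex, or {d, d', d'} at a leaf vertex with d ∈ {a,b,c}). -/
open scoped Classical

/-!
Choose a matching `M` covering every vertex that lies on no bridge and no loop; such a matching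
exists by Tutte's theorem, because an odd set of such vertices has at least three boundary edges.
The remaining non-bridges, loops apart, form a subgraph of maximum degree two, that is, cycles and
paths. Give both the letter and the prime `d'` to the edges of the cycles, and give the unprimed
letters `0` to `M` and alternately `1`, `2` along the paths. At each vertex this extends to the
incident bridges, but with a letter that depends on the end of the bridge. As the bridges form a
forest, permuting the three letters separately at every vertex makes the two ends of each bridge
agree without disturbing the non-bridges relative to one another. A loop finally receives the two
colors that its vertex is missing.
-/

open Finset

section Extension

variable {α β : Type*} [Fintype α]

theorem exists_eqOn_injOn {s t : Finset β} {f : β → α} (hst : s ⊆ t) (hf : Set.InjOn f s)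
    (ht : #t ≤ Fintype.card α) : ∃ g : β → α, Set.EqOn g f s ∧ Set.InjOn g t := by
  obtain ⟨r, hsr, -, hr⟩ := exists_subsuperset_card_eq (subset_univ (s.image f))
    (card_image_le.trans (card_le_card hst)) ht
  obtain ⟨g, hg⟩ := exists_equiv_extend_of_card_eq (s := s.subtype (· ∈ t)) (f := fun e : t => f e)
    ((Fintype.card_coe t).trans hr.symm)
    (image_subset_iff.2 fun e he => hsr (mem_image_of_mem f (mem_subtype.1 he)))
    fun e he e' he' h => Subtype.ext (hf (mem_subtype.1 he) (mem_subtype.1 he') h)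
  refine ⟨fun e => if he : e ∈ t then g ⟨e, he⟩ else f e, fun e he => ?_, fun e he e' he' h => ?_⟩
  · simpa [hst he] using hg ⟨e, hst he⟩ (mem_subtype.2 he)
  · simpa [mem_coe.1 he, mem_coe.1 he'] using h

end Extension

section Tutte

variable {V : Type*} {H : SimpleGraph V}

/-- `𝒞` is a family of disjoint odd vertex sets that the removal of `S` separates from one another
and from the rest of `H`. Such families stand in for the sets of odd components of `H - S`. -/
structure IsOddSeparated (H : SimpleGraph V) (S : Finset V) (𝒞 : Finset (Finset V)) : Prop where
  odd_card : ∀ C ∈ 𝒞, Odd #C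
  pairwiseDisjoint : (𝒞 : Set (Finset V)).PairwiseDisjoint id
  disjoint : ∀ C ∈ 𝒞, Disjoint C S
  mem_or_mem : ∀ C ∈ 𝒞, ∀ u ∈ C, ∀ w, H.Adj u w → w ∈ C ∨ w ∈ S

theorem exists_isOddSeparated_card_eq [Finite V] (H : SimpleGraph V) (S : Finset V) :
    ∃ 𝒞, IsOddSeparated H S 𝒞 ∧
      #𝒞 = ((⊤ : H.Subgraph).deleteVerts S).coe.oddComponents.ncard := by
  have := Fintype.ofFinite V
  set K := ((⊤ : H.Subgraph).deleteVerts S).coe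
  let supp (c : K.ConnectedComponent) : Finset V := (Subtype.val '' c.supp).toFinset
  have mem_supp {c v} : v ∈ supp c ↔ ∃ h, K.connectedComponentMk ⟨v, h⟩ = c := by simp [supp]
  have eq_of_mem {c d v} (hc : v ∈ supp c) (hd : v ∈ supp d) : c = d := by
    obtain ⟨_, rfl⟩ := mem_supp.1 hc
    obtain ⟨_, rfl⟩ := mem_supp.1 hd
    rfl
  have supp_injective : Function.Injective supp := fun c d h => by
    obtain ⟨v, hv⟩ := c.nonempty_supp
    have hvc : v.1 ∈ supp c := mem_supp.2 ⟨v.2, hv⟩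
    exact eq_of_mem hvc (h ▸ hvc)
  refine ⟨K.oddComponents.toFinset.map ⟨supp, supp_injective⟩, ⟨?_, ?_, ?_, ?_⟩, ?_⟩
  · simp only [mem_map, Set.mem_toFinset, Function.Embedding.coeFn_mk, forall_exists_index,
      and_imp]
    rintro _ c hc rfl
    rwa [← Set.ncard_eq_toFinset_card', Set.ncard_image_of_injective _ Subtype.val_injective]
  · intro C hC D hD hCD
    obtain ⟨c, -, rfl⟩ := mem_map.1 hC
    obtain ⟨d, -, rfl⟩ := mem_map.1 hD
    exact disjoint_left.2 fun v hc hd => hCD (congrArg supp (eq_of_mem hc hd))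
  · intro C hC
    obtain ⟨c, -, rfl⟩ := mem_map.1 hC
    refine disjoint_left.2 fun v hv hvS => ?_
    obtain ⟨h, -⟩ := mem_supp.1 hv
    exact h.2 hvS
  · intro C hC u hu w huw
    obtain ⟨c, -, rfl⟩ := mem_map.1 hC
    refine or_iff_not_imp_right.2 fun hwS => ?_
    obtain ⟨huS, rfl⟩ := mem_supp.1 hu
    refine mem_supp.2 ⟨⟨trivial, hwS⟩, SimpleGraph.ConnectedComponent.sound ?_⟩
    refine (SimpleGraph.Adj.reachable ?_).symm
    have huS' : u ∉ S := huS.2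
    simp [K, huS', hwS, huw]
  · rw [card_map, Set.ncard_eq_toFinset_card']

theorem exists_isPerfectMatching_of_card_le [Fintype V] (hV : Even (Fintype.card V))
    (h : ∀ S 𝒞, IsOddSeparated H S 𝒞 → #𝒞 ≤ #S + 1) :
    ∃ M : H.Subgraph, M.IsPerfectMatching := by
  rw [SimpleGraph.tutte]
  intro S hS
  obtain ⟨𝒞, h𝒞, hcard⟩ := exists_isOddSeparated_card_eq H S.toFinset
  have hle := h _ _ h𝒞
  have hparity := SimpleGraph.odd_ncard_oddComponents ((⊤ : H.Subgraph).deleteVerts S).coe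
  have hverts : Nat.card ((⊤ : H.Subgraph).deleteVerts S).verts + S.ncard = Fintype.card V := by
    rw [SimpleGraph.Subgraph.deleteVerts_verts, SimpleGraph.Subgraph.verts_top,
      ← Set.compl_eq_univ_sdiff, Nat.card_coe_set_eq, add_comm, Set.ncard_add_ncard_compl,
      Nat.card_eq_fintype_card]
  rw [SimpleGraph.IsTutteViolator] at hS
  rw [Set.coe_toFinset] at hcard
  rw [hcard, ← Set.ncard_eq_toFinset_card'] at hle
  rw [← hverts] at hV
  grind

/-- Tutte's theorem for matchings that have to cover only the vertices of `W`. -/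
theorem exists_isMatching_subset_verts [Fintype V] {W : Set V} (hV : Even (Fintype.card V))
    (h : ∀ S 𝒞, IsOddSeparated H S 𝒞 → (∀ C ∈ 𝒞, ↑C ⊆ W) → #𝒞 ≤ #S) :
    ∃ M : H.Subgraph, M.IsMatching ∧ W ⊆ M.verts := by
  -- Make the other vertices into a clique: at most one component can then reach outside `W`.
  let K := H ⊔ SimpleGraph.fromRel fun u w => u ∉ W ∧ w ∉ W
  obtain ⟨P, hP⟩ : ∃ P : K.Subgraph, P.IsPerfectMatching := by
    refine exists_isPerfectMatching_of_card_le hV fun S 𝒞 h𝒞 => ?_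
    have hinside : #{C ∈ 𝒞 | ↑C ⊆ W} ≤ #S :=
      h S _ ⟨fun C hC => h𝒞.odd_card C (mem_filter.1 hC).1,
        h𝒞.pairwiseDisjoint.subset (coe_subset.2 (filter_subset _ _)),
        fun C hC => h𝒞.disjoint C (mem_filter.1 hC).1,
        fun C hC u hu w huw => h𝒞.mem_or_mem C (mem_filter.1 hC).1 u hu w (Or.inl huw)⟩
        fun C hC => (mem_filter.1 hC).2
    have hcrossing : #{C ∈ 𝒞 | ¬ ↑C ⊆ W} ≤ 1 := by
      refine card_le_one.2 fun C hC D hD => ?_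
      obtain ⟨hC, u, huC, hu⟩ := (mem_filter.1 hC).imp_right Set.not_subset.1
      obtain ⟨hD, w, hwD, hw⟩ := (mem_filter.1 hD).imp_right Set.not_subset.1
      refine h𝒞.pairwiseDisjoint.elim_finset hC hD w ?_ hwD
      obtain rfl | huw := eq_or_ne u w
      · exact huC
      · exact (h𝒞.mem_or_mem C hC u huC w (Or.inr ⟨huw, Or.inl ⟨hu, hw⟩⟩)).resolve_right
          (disjoint_left.1 (h𝒞.disjoint D hD) hwD)
    have := card_filter_add_card_filter_not (s := 𝒞) fun C => ↑C ⊆ W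
    omega
  rw [SimpleGraph.Subgraph.isPerfectMatching_iff] at hP
  refine ⟨⟨{v | ∃ w, P.Adj v w ∧ H.Adj v w}, fun v w => P.Adj v w ∧ H.Adj v w, And.right,
    fun h => ⟨_, h⟩, ⟨fun _ _ h => ⟨h.1.symm, h.2.symm⟩⟩⟩, fun v ⟨w, hw⟩ =>
      ⟨w, hw, fun w' hw' => (hP v).unique hw'.1 hw.1⟩, fun v hv => ?_⟩
  obtain ⟨w, hw, -⟩ := hP v
  refine ⟨w, hw, (P.adj_sub hw).resolve_right ?_⟩
  rintro ⟨-, h | h⟩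
  exacts [h.1 hv, h.2 hv]

end Tutte

namespace Multigraph

variable {G : Multigraph}

@[simp]
theorem mem_star {v : G.V} {e : G.E} : e ∈ G.star v ↔ v ∈ G.ends e := by
  simp [star]

section Incidence

theorem incCount_eq_add {e : G.E} {u w : G.V} (h : G.ends e = s(u, w)) (v : G.V) :
    G.incCount v e = (if v = u then 1 else 0) + (if v = w then 1 else 0) := by
  simp only [incCount, h, Sym2.diag, Sym2.eq_iff, Sym2.mem_iff]
  grind

theorem incCount_eq_zero_iff {v : G.V} {e : G.E} : G.incCount v e = 0 ↔ v ∉ G.ends e := by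
  induction h : G.ends e with
  | _ u w => simp [incCount_eq_add h, Sym2.mem_iff]

theorem incCount_of_isDiag {v : G.V} {e : G.E} (hv : v ∈ G.ends e) (he : (G.ends e).IsDiag) :
    G.incCount v e = 2 := by
  induction h : G.ends e with
  | _ u w =>
    rw [h, Sym2.mk_isDiag_iff] at he
    rw [h, Sym2.mem_iff] at hv
    subst he
    simp [incCount_eq_add h, or_self_iff.1 hv]

theorem incCount_of_not_isDiag {v : G.V} {e : G.E} (hv : v ∈ G.ends e)
    (he : ¬ (G.ends e).IsDiag) : G.incCount v e = 1 := by
  induction h : G.ends e with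
  | _ u w =>
    rw [h, Sym2.mk_isDiag_iff] at he
    rw [h, Sym2.mem_iff] at hv
    rw [incCount_eq_add h]
    grind

theorem sum_star_incCount (v : G.V) : ∑ e ∈ G.star v, G.incCount v e = G.degree v :=
  sum_subset (subset_univ _) fun _ _ h => incCount_eq_zero_iff.2 (mt mem_star.2 h)

theorem card_star_le_degree (v : G.V) : #(G.star v) ≤ G.degree v := by
  rw [← sum_star_incCount, card_eq_sum_ones]
  exact sum_le_sum fun e he =>
    Nat.one_le_iff_ne_zero.2 fun h => incCount_eq_zero_iff.1 h (mem_star.1 he)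

/-- No loop is attached to `v`. -/
def LooplessAt (v : G.V) : Prop := ∀ e ∈ G.star v, ¬ (G.ends e).IsDiag

theorem LooplessAt.card_star {v : G.V} (hv : LooplessAt v) : #(G.star v) = G.degree v := by
  rw [← sum_star_incCount, card_eq_sum_ones]
  exact sum_congr rfl fun e he => (incCount_of_not_isDiag (mem_star.1 he) (hv e he)).symm

theorem exists_star_eq_pair_of_isDiag {e : G.E} (hdeg : ∀ v ∈ G.ends e, G.degree v = 3)
    (he : (G.ends e).IsDiag) :
    ∃ e₁, e₁ ≠ e ∧ ¬ (G.ends e₁).IsDiag ∧ ∀ v ∈ G.ends e, G.star v = {e, e₁} := by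
  obtain ⟨v, hv⟩ : ∃ v, s(v, v) = G.ends e := ⟨_, Sym2.diag_diagElem he⟩
  have hve : v ∈ G.ends e := by simp [← hv]
  have hsum : ∑ e' ∈ (G.star v).erase e, G.incCount v e' = 1 := by
    have := add_sum_erase (G.star v) (G.incCount v) (mem_star.2 hve)
    rw [sum_star_incCount, hdeg v hve, incCount_of_isDiag hve he] at this
    omega
  have hpos : ∀ e' ∈ (G.star v).erase e, 1 ≤ G.incCount v e' := fun e' he' =>
    Nat.one_le_iff_ne_zero.2 fun h => incCount_eq_zero_iff.1 h (mem_star.1 (mem_of_mem_erase he'))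
  obtain ⟨e₁, h₁⟩ : ∃ e₁, (G.star v).erase e = {e₁} := by
    refine card_eq_one.1 (le_antisymm ?_ (card_pos.2 ?_))
    · simpa [hsum] using card_nsmul_le_sum _ _ 1 hpos
    · exact nonempty_of_sum_ne_zero (hsum.trans_ne one_ne_zero)
  obtain ⟨hne, hmem⟩ := mem_erase.1 (h₁ ▸ mem_singleton_self e₁)
  refine ⟨e₁, hne, fun hd => ?_, fun w hw => ?_⟩
  · rw [h₁, sum_singleton, incCount_of_isDiag (mem_star.1 hmem) hd] at hsum
    omega
  · obtain rfl : w = v := by simpa [← hv] using hw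
    rw [← h₁, insert_erase (mem_star.2 hve)]

theorem card_incMultiset (v : G.V) : Multiset.card (G.incMultiset v) = G.degree v := by
  simp [incMultiset, degree]

theorem count_incMultiset (v : G.V) (e : G.E) : (G.incMultiset v).count e = G.incCount v e := by
  simp [incMultiset, Multiset.count_sum', Multiset.count_nsmul, Multiset.count_singleton]

theorem exists_cons_eq_incMultiset (hG : G.CubicPseudo) (e : G.E) :
    ∃ m : Multiset G.E, Multiset.card m = 2 ∧ ∃ v, e ::ₘ m = G.incMultiset v := by
  obtain ⟨v, hv⟩ : ∃ v, v ∈ G.ends e := ⟨_, Sym2.out_fst_mem _⟩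
  have hmem : e ∈ G.incMultiset v := by
    rwa [← Multiset.count_ne_zero, count_incMultiset, Ne, incCount_eq_zero_iff, not_not]
  refine ⟨(G.incMultiset v).erase e, ?_, v, Multiset.cons_erase hmem⟩
  rw [Multiset.card_erase_of_mem hmem, card_incMultiset, hG v, Nat.pred_succ]

theorem exists_multiset_coloring_of_looplessAt {H : Multigraph} (hG : G.CubicPseudo)
    (hH : H.CubicPseudo) (c : G.E → H.E)
    (hc : ∀ x, LooplessAt x → ∃ y, ∑ e ∈ G.star x, {c e} = H.incMultiset y) :
    ∃ f : G.E → Multiset H.E,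
      (∀ e, ¬ (G.ends e).IsDiag → Multiset.card (f e) = 1) ∧
      (∀ e, (G.ends e).IsDiag → Multiset.card (f e) = 2) ∧
      ∀ x, ∃ y, ∑ e ∈ G.star x, f e = H.incMultiset y := by
  choose e₁ hne hloop hstar using fun e =>
    exists_star_eq_pair_of_isDiag (e := e) fun v _ => hG v
  choose m hm y hy using exists_cons_eq_incMultiset hH
  refine ⟨fun e => if he : (G.ends e).IsDiag then m (c (e₁ e he)) else {c e},
    fun e he => by simp [he], fun e he => by simp [he, hm], fun x => ?_⟩
  by_cases hx : LooplessAt x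
  · rw [sum_congr rfl fun e he => dif_neg (hx e he)]
    exact hc x hx
  · rw [LooplessAt] at hx
    push Not at hx
    obtain ⟨e, hex, he⟩ := hx
    refine ⟨y (c (e₁ e he)), ?_⟩
    rw [hstar e he x (mem_star.1 hex), sum_pair (hne e he).symm, dif_pos he,
      dif_neg (hloop e he), ← hy, add_comm, Multiset.singleton_add]

end Incidence

section Bridges

theorem reach_of_mem_ends {A : Set G.E} {e : G.E} (he : e ∈ A) {u w : G.V} (hu : u ∈ G.ends e)
    (hw : w ∈ G.ends e) : G.Reach A u w := by
  obtain rfl | hne := eq_or_ne u w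
  · exact Relation.ReflTransGen.refl
  · exact Relation.ReflTransGen.single ⟨e, he, (Sym2.mem_and_mem_iff hne).1 ⟨hu, hw⟩⟩

theorem Reach.symm {A : Set G.E} {u w : G.V} (h : G.Reach A u w) : G.Reach A w u := by
  induction h with
  | refl => exact Relation.ReflTransGen.refl
  | tail _ h ih =>
    obtain ⟨e, he, hends⟩ := h
    exact Relation.ReflTransGen.head ⟨e, he, by rw [hends, Sym2.eq_swap]⟩ ih

theorem Reach.trans {A : Set G.E} {u v w : G.V} (huv : G.Reach A u v) (hvw : G.Reach A v w) :
    G.Reach A u w :=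
  Relation.ReflTransGen.trans huv hvw

theorem Reach.mono {A B : Set G.E} (hAB : A ⊆ B) {u w : G.V} (h : G.Reach A u w) :
    G.Reach B u w :=
  Relation.ReflTransGen.mono (fun _ _ ⟨e, he, hends⟩ => ⟨e, hAB he, hends⟩) _ _ h

theorem Reach.exists_last_edge {A : Set G.E} {v w : G.V} (h : G.Reach A w v) (hw : w ≠ v) :
    ∃ e ∈ A, ∃ u, G.ends e = s(u, v) ∧ G.Reach {e' ∈ A | v ∉ G.ends e'} w u := by
  induction h using Relation.ReflTransGen.head_induction_on with
  | refl => exact absurd rfl hw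
  | @head a b hab _ ih =>
    obtain ⟨e, he, hends⟩ := hab
    obtain rfl | hb := eq_or_ne b v
    · exact ⟨e, he, a, hends, Relation.ReflTransGen.refl⟩
    · obtain ⟨e₁, he₁, u, hu, hr⟩ := ih hb
      refine ⟨e₁, he₁, u, hu, Relation.ReflTransGen.head ⟨e, ⟨he, ?_⟩, hends⟩ hr⟩
      simp [hends, hw.symm, hb.symm]

/-- The bridges of the spanning subgraph with edge set `A`. -/
def bridgeSet (G : Multigraph) (A : Set G.E) : Set G.E :=
  {e ∈ A | ∀ u w, G.ends e = s(u, w) → ¬ G.Reach (A \ {e}) u w}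

/-- The edges on cycles of the spanning subgraph with edge set `A`, as its non-bridges. -/
def cycleSet (G : Multigraph) (A : Set G.E) : Set G.E := A \ G.bridgeSet A

theorem mem_bridgeSet_univ {e : G.E} : e ∈ G.bridgeSet Set.univ ↔ G.IsBridge e := by
  simp only [bridgeSet, ← Set.compl_eq_univ_sdiff]
  simp [IsBridge, Set.compl_def]

theorem mem_cycleSet_iff {A : Set G.E} {e : G.E} :
    e ∈ G.cycleSet A ↔ e ∈ A ∧ ∃ u w, G.ends e = s(u, w) ∧ G.Reach (A \ {e}) u w := by
  simp only [cycleSet, bridgeSet, Set.mem_sdiff, Set.mem_ofPred_eq]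
  push Not
  tauto

theorem mem_cycleSet_univ {e : G.E} : e ∈ G.cycleSet Set.univ ↔ ¬ G.IsBridge e := by
  simp [cycleSet, mem_bridgeSet_univ]

theorem cycleSet_mono {A B : Set G.E} (hAB : A ⊆ B) : G.cycleSet A ⊆ G.cycleSet B := by
  intro e he
  obtain ⟨heA, u, w, hends, h⟩ := mem_cycleSet_iff.1 he
  exact mem_cycleSet_iff.2 ⟨hAB heA, u, w, hends, h.mono (Set.sdiff_subset_sdiff_left hAB)⟩

theorem exists_ne_mem_cycleSet {A : Set G.E} {e : G.E} {v : G.V} (he : e ∈ G.cycleSet A)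
    (hv : v ∈ G.ends e) (hloop : ¬ (G.ends e).IsDiag) :
    ∃ e₁ ∈ G.cycleSet A, e₁ ≠ e ∧ v ∈ G.ends e₁ := by
  obtain ⟨w, hw⟩ := hv
  have hwv : w ≠ v := by
    rintro rfl
    exact hloop (hw ▸ rfl)
  obtain ⟨heA, a, b, hab, hr⟩ := mem_cycleSet_iff.1 he
  have hreach : G.Reach (A \ {e}) w v := by
    rw [hw, Sym2.eq_iff] at hab
    obtain ⟨rfl, rfl⟩ | ⟨rfl, rfl⟩ := hab
    exacts [hr.symm, hr]
  obtain ⟨e₁, ⟨he₁A, he₁⟩, u, hu, hwu⟩ := hreach.exists_last_edge hwv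
  refine ⟨e₁, mem_cycleSet_iff.2 ⟨he₁A, u, v, hu, ?_⟩, he₁, by simp [hu]⟩
  have he_sdiff : e ∈ A \ {e₁} := ⟨heA, Ne.symm he₁⟩
  have havoid : {e' ∈ A \ {e} | v ∉ G.ends e'} ⊆ A \ {e₁} := fun e' he' =>
    ⟨he'.1.1, fun h => he'.2 (by simp [Set.mem_singleton_iff.1 h, hu])⟩
  exact (hwu.mono havoid).symm.trans
    (reach_of_mem_ends he_sdiff (by simp [hw]) (by simp [hw]))

theorem LooplessAt.card_filter_cycleSet_ne_one {v : G.V} (hv : LooplessAt v) (A : Set G.E) :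
    #{e ∈ G.star v | e ∈ G.cycleSet A} ≠ 1 := by
  intro h
  obtain ⟨e, he⟩ := card_eq_one.1 h
  have hmem : e ∈ G.star v ∧ e ∈ G.cycleSet A := mem_filter.1 (he ▸ mem_singleton_self e)
  obtain ⟨e₁, h₁, hne, hv₁⟩ :=
    exists_ne_mem_cycleSet hmem.2 (mem_star.1 hmem.1) (hv e hmem.1)
  exact hne (mem_singleton.1 (he ▸ mem_filter.2 ⟨mem_star.2 hv₁, h₁⟩))

section Labels

variable {Γ α : Type*} [Group Γ] [MulAction Γ α] [MulAction.IsPretransitive Γ α]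

theorem exists_smul_eq_smul_of_cycleSet (A : Set G.E) (t : G.V → G.E → α)
    (ht : ∀ e ∈ G.cycleSet A, ∀ u ∈ G.ends e, ∀ w ∈ G.ends e, t u e = t w e) :
    ∃ x : G.V → Γ, ∀ e ∈ A, ∀ u ∈ G.ends e, ∀ w ∈ G.ends e, x u • t u e = x w • t w e := by
  induction A using WellFoundedLT.induction with
  | ind A ih =>
  obtain hA | ⟨b, hb⟩ := (G.bridgeSet A).eq_empty_or_nonempty
  · exact ⟨1, fun e he u hu w hw => by simpa using ht e ⟨he, by simp [hA]⟩ u hu w hw⟩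
  obtain ⟨x, hx⟩ := ih (A \ {b}) (Set.sdiff_singleton_ssubset.2 hb.1) fun e he =>
    ht e (cycleSet_mono Set.sdiff_subset he)
  obtain ⟨u₀, w₀, hends⟩ : ∃ u₀ w₀, G.ends b = s(u₀, w₀) := ⟨_, _, (Quot.out_eq _).symm⟩
  obtain ⟨g, hg⟩ := MulAction.exists_smul_eq Γ (x u₀ • t u₀ b) (x w₀ • t w₀ b)
  have hu₀ : G.Reach (A \ {b}) u₀ u₀ := Relation.ReflTransGen.refl
  have hw₀ : ¬ G.Reach (A \ {b}) u₀ w₀ := hb.2 u₀ w₀ hends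
  refine ⟨fun v => if G.Reach (A \ {b}) u₀ v then g * x v else x v, fun e he u hu w hw => ?_⟩
  obtain rfl | heb := eq_or_ne e b
  · rw [hends, Sym2.mem_iff] at hu hw
    obtain rfl | rfl := hu <;> obtain rfl | rfl := hw <;> simp [hu₀, hw₀, mul_smul, hg]
  · have heA : e ∈ A \ {b} := ⟨he, heb⟩
    have hside : G.Reach (A \ {b}) u₀ u ↔ G.Reach (A \ {b}) u₀ w :=
      ⟨fun h => h.trans (reach_of_mem_ends heA hu hw),
        fun h => h.trans (reach_of_mem_ends heA hw hu)⟩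
    have hxe := hx e heA u hu w hw
    by_cases h : G.Reach (A \ {b}) u₀ w <;> simp [hside, h, mul_smul, hxe]

variable (Γ) in
theorem exists_edge_label_eq_smul (A : Set G.E) (t : G.V → G.E → α)
    (ht : ∀ e ∈ G.cycleSet A, ∀ u ∈ G.ends e, ∀ w ∈ G.ends e, t u e = t w e) :
    ∃ (x : G.V → Γ) (L : G.E → α), ∀ e ∈ A, ∀ v ∈ G.ends e, L e = x v • t v e := by
  obtain ⟨x, hx⟩ := exists_smul_eq_smul_of_cycleSet (Γ := Γ) A t ht
  exact ⟨x, fun e => x (G.ends e).out.1 • t (G.ends e).out.1 e,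
    fun e he v hv => hx e he _ (Sym2.out_fst_mem _) v hv⟩

end Labels

theorem exists_injOn_bridgeSet {α : Type*} [Fintype α] [Nonempty α] (A : Set G.E)
    (hA : ∀ v, #{e ∈ G.star v | e ∈ G.bridgeSet A} ≤ Fintype.card α) :
    ∃ L : G.E → α, ∀ v, Set.InjOn L {e ∈ G.bridgeSet A | v ∈ G.ends e} := by
  obtain ⟨a⟩ := ‹Nonempty α›
  choose t _ ht using fun v =>
    exists_eqOn_injOn (f := fun _ => a) (empty_subset _) (by simp) (hA v)
  obtain ⟨x, L, hL⟩ := exists_edge_label_eq_smul (Equiv.Perm α) A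
    (fun v e => if e ∈ G.bridgeSet A then t v e else a) fun e he u _ w _ => by simp [he.2]
  refine ⟨L, fun v e he e' he' h => ht v ?_ ?_ ((x v).injective ?_)⟩
  · simpa using he.symm
  · simpa using he'.symm
  · simpa [hL e he.1.1 v he.2, hL e' he'.1.1 v he'.2, he.1, he'.1] using h

end Bridges

section Boundary

/-- The edges with exactly one end in `C`. -/
noncomputable def boundary (C : Finset G.V) : Finset G.E :=
  {e | ∃ u ∈ C, ∃ w ∉ C, G.ends e = s(u, w)}

theorem mem_boundary {C : Finset G.V} {e : G.E} :
    e ∈ boundary C ↔ ∃ u ∈ C, ∃ w ∉ C, G.ends e = s(u, w) := by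
  simp [boundary]

theorem odd_card_boundary_iff (C : Finset G.V) :
    Odd #(boundary C) ↔ Odd #{v ∈ C | Odd (G.degree v)} := by
  have hodd (e : G.E) : e ∈ boundary C ↔ Odd (∑ v ∈ C, G.incCount v e) := by
    induction h : G.ends e with
    | _ a b =>
      simp only [mem_boundary, h, incCount_eq_add h, sum_add_distrib, sum_ite_eq', Sym2.eq_iff]
      by_cases ha : a ∈ C <;> by_cases hb : b ∈ C <;> grind
  rw [← odd_sum_iff_odd_card_odd]
  simp only [degree]
  rw [sum_comm, odd_sum_iff_odd_card_odd]
  simp [← hodd]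

theorem CubicPseudo.odd_card_boundary_iff (hG : G.CubicPseudo) (C : Finset G.V) :
    Odd #(boundary C) ↔ Odd #C := by
  rw [Multigraph.odd_card_boundary_iff, filter_true_of_mem fun v _ => by rw [hG v]; decide]

theorem CubicPseudo.even_card_vertices (hG : G.CubicPseudo) : Even (Fintype.card G.V) := by
  have hempty : boundary (univ : Finset G.V) = ∅ := by simp [boundary]
  simpa [hempty] using hG.odd_card_boundary_iff univ

theorem isBridge_of_boundary_eq_singleton {C : Finset G.V} {e : G.E} (h : boundary C = {e}) :
    G.IsBridge e := by
  have hstay {u w : G.V} (hu : u ∈ C) (hr : G.Reach {e' | e' ≠ e} u w) : w ∈ C := by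
    induction hr with
    | refl => exact hu
    | @tail b c _ hbc ih =>
      obtain ⟨e', he', hends⟩ := hbc
      by_contra hc
      exact he' (mem_singleton.1 (h ▸ mem_boundary.2 ⟨b, ih, c, hc, hends⟩))
  obtain ⟨u, hu, w, hw, hends⟩ := mem_boundary.1 (h ▸ mem_singleton_self e)
  intro a b hab hr
  rw [hends, Sym2.eq_iff] at hab
  obtain ⟨rfl, rfl⟩ | ⟨rfl, rfl⟩ := hab
  exacts [hw (hstay hu hr), hw (hstay hu hr.symm)]

theorem CubicPseudo.three_le_card_boundary (hG : G.CubicPseudo) {C : Finset G.V}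
    (hodd : Odd #C) (hC : ∀ v ∈ C, ∀ e ∈ G.star v, ¬ G.IsBridge e) : 3 ≤ #(boundary C) := by
  have hne : #(boundary C) ≠ 1 := fun h => by
    obtain ⟨e, he⟩ := card_eq_one.1 h
    obtain ⟨u, hu, w, -, hends⟩ := mem_boundary.1 (he ▸ mem_singleton_self e)
    exact hC u hu e (by simp [hends]) (isBridge_of_boundary_eq_singleton he)
  obtain ⟨k, hk⟩ := (hG.odd_card_boundary_iff C).2 hodd
  omega

end Boundary

section Matching

/-- A vertex is inner if it lies on no bridge and on no loop; these are the vertices that a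
matching in the role of a perfect matching has to cover. -/
def IsInner (v : G.V) : Prop := ∀ e ∈ G.star v, ¬ G.IsBridge e ∧ ¬ (G.ends e).IsDiag

/-- The simple graph in which two vertices are adjacent if some non-bridge joins them. -/
def nonbridgeGraph (G : Multigraph) : SimpleGraph G.V where
  Adj u w := u ≠ w ∧ ∃ e, ¬ G.IsBridge e ∧ G.ends e = s(u, w)
  symm := ⟨fun _ _ ⟨hne, e, he, hends⟩ => ⟨hne.symm, e, he, by rw [hends, Sym2.eq_swap]⟩⟩
  loopless := ⟨fun _ h => h.1 rfl⟩

theorem CubicPseudo.card_le_of_isOddSeparated (hG : G.CubicPseudo) {S : Finset G.V}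
    {𝒞 : Finset (Finset G.V)} (h𝒞 : IsOddSeparated G.nonbridgeGraph S 𝒞)
    (hinner : ∀ C ∈ 𝒞, ∀ v ∈ C, IsInner v) : #𝒞 ≤ #S := by
  have hboundary : ∀ C ∈ 𝒞, ∀ e ∈ boundary C, ∃ u ∈ C, ∃ w ∈ S, G.ends e = s(u, w) := by
    intro C hC e he
    obtain ⟨u, hu, w, hw, hends⟩ := mem_boundary.1 he
    have hadj : G.nonbridgeGraph.Adj u w :=
      ⟨ne_of_mem_of_not_mem hu hw, e, (hinner C hC u hu e (by simp [hends])).1, hends⟩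
    exact ⟨u, hu, w, (h𝒞.mem_or_mem C hC u hu w hadj).resolve_left hw, hends⟩
  have hdisjoint : (𝒞 : Set (Finset G.V)).PairwiseDisjoint boundary := by
    intro C hC D hD hCD
    refine disjoint_left.2 fun e heC heD => ?_
    obtain ⟨u, hu, w, -, hends⟩ := hboundary C hC e heC
    obtain ⟨u', hu', w', hw', hends'⟩ := hboundary D hD e heD
    rw [hends, Sym2.eq_iff] at hends'
    obtain ⟨rfl, rfl⟩ | ⟨rfl, rfl⟩ := hends'
    · exact disjoint_left.1 (h𝒞.pairwiseDisjoint hC hD hCD) hu hu'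
    · exact disjoint_left.1 (h𝒞.disjoint C hC) hu hw'
  have hcount : #𝒞 * 3 ≤ #S * 3 :=
    calc #𝒞 * 3 ≤ ∑ C ∈ 𝒞, #(boundary C) :=
          card_nsmul_le_sum _ _ _ fun C hC => hG.three_le_card_boundary (h𝒞.odd_card C hC)
            fun v hv e he => (hinner C hC v hv e he).1
      _ = #(𝒞.biUnion boundary) := (card_biUnion hdisjoint).symm
      _ ≤ #(S.biUnion G.star) := card_le_card <| biUnion_subset.2 fun C hC e he => by
          obtain ⟨u, -, w, hw, hends⟩ := hboundary C hC e he
          exact mem_biUnion.2 ⟨w, hw, by simp [hends]⟩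
      _ ≤ #S * 3 := card_biUnion_le_card_mul _ _ _ fun v _ => hG v ▸ card_star_le_degree v
  omega

theorem exists_isMatching_of_subgraph (P : G.nonbridgeGraph.Subgraph) (hP : P.IsMatching) :
    ∃ M : Set G.E, G.IsMatching M ∧ ∀ v ∈ P.verts, ∃ e ∈ M, v ∈ G.ends e := by
  have hedge : ∀ z ∈ P.edgeSet, ∃ e, G.ends e = z := by
    rintro ⟨u, w⟩ huw
    obtain ⟨-, e, -, hends⟩ := P.adj_sub huw
    exact ⟨e, hends⟩
  choose g hg using hedge
  refine ⟨{e | ∃ z hz, g z hz = e}, ?_, fun v hv => ?_⟩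
  · rintro _ ⟨z, hz, rfl⟩ _ ⟨z', hz', rfl⟩ hne ⟨v, hv, hv'⟩
    rw [hg] at hv hv'
    obtain ⟨a, rfl⟩ := hv
    obtain ⟨b, rfl⟩ := hv'
    obtain rfl : a = b := hP.eq_of_adj_left hz hz'
    exact hne rfl
  · obtain ⟨w, hw, -⟩ := hP hv
    have hvw : s(v, w) ∈ P.edgeSet := hw
    exact ⟨_, ⟨s(v, w), hvw, rfl⟩, by simp [hg]⟩

theorem CubicPseudo.exists_isMatching_covering_isInner (hG : G.CubicPseudo) :
    ∃ M : Set G.E, G.IsMatching M ∧ ∀ v, IsInner v → ∃ e ∈ M, v ∈ G.ends e := by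
  obtain ⟨P, hP, hcover⟩ := exists_isMatching_subset_verts (W := {v | IsInner v})
    hG.even_card_vertices fun S 𝒞 h𝒞 hinner => hG.card_le_of_isOddSeparated h𝒞 hinner
  obtain ⟨M, hM, hPM⟩ := exists_isMatching_of_subgraph P hP
  exact ⟨M, hM, fun v hv => hPM v (hcover hv)⟩

end Matching

section Letters

/-- The edges outside `M` that are neither bridges nor loops. When `M` is a matching covering the
inner vertices of a cubic pseudo-graph, they form disjoint paths and cycles. -/
def residual (M : Set G.E) : Set G.E := {e | ¬ G.IsBridge e ∧ ¬ (G.ends e).IsDiag ∧ e ∉ M}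

theorem card_filter_residual_le_two {M : Set G.E} {v : G.V} (hdeg : G.degree v ≤ 3)
    (hM : IsInner v → ∃ e ∈ M, v ∈ G.ends e) :
    #{e ∈ G.star v | e ∈ residual M} ≤ 2 := by
  obtain ⟨e, hev, he⟩ : ∃ e ∈ G.star v, e ∉ residual M := by
    by_cases hv : IsInner v
    · obtain ⟨e, heM, hev⟩ := hM hv
      exact ⟨e, mem_star.2 hev, fun h => h.2.2 heM⟩
    · rw [IsInner] at hv
      push Not at hv
      obtain ⟨e, hev, he⟩ := hv
      exact ⟨e, hev, fun h => h.2.1 (he h.1)⟩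
  have hlt : #{e ∈ G.star v | e ∈ residual M} < #(G.star v) :=
    card_lt_card (filter_ssubset.2 ⟨e, hev, he⟩)
  have hle := (card_star_le_degree v).trans hdeg
  omega

/-- The letters of the edges of `∂(v)`, where the edges in `P` carry a prime, are those of an
incidence multiset of `S₄`: `{a, b, c}`, or `{d, d', d'}` for a letter `d`. The letters `a`, `b`,
`c` are encoded as `Fin 3`. -/
def IsLetteredAt (P : Set G.E) (σ : G.E → Fin 3) (v : G.V) : Prop :=
  ((∀ e ∈ G.star v, e ∉ P) ∧ Set.InjOn σ (G.star v)) ∨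
    (#{e ∈ G.star v | e ∈ P} = 2 ∧ ∃ d, ∀ e ∈ G.star v, σ e = d)

theorem IsLetteredAt.of_eq_perm {P : Set G.E} {σ τ : G.E → Fin 3} {v : G.V}
    (h : IsLetteredAt P σ v) (π : Equiv.Perm (Fin 3)) (hτ : ∀ e ∈ G.star v, τ e = π (σ e)) :
    IsLetteredAt P τ v := by
  refine h.imp (And.imp_right fun hσ e he e' he' hee' => hσ he he' (π.injective ?_))
    (And.imp_right fun ⟨d, hd⟩ => ⟨π d, fun e he => by rw [hτ e he, hd e he]⟩)
  rwa [← hτ e he, ← hτ e' he']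

/-- The letters of the non-bridges before any permutation: the paths of `residual M` alternate
between `1` and `2` when `L` is a proper coloring of their edges. -/
noncomputable def baseLetter (M : Set G.E) (L : G.E → Fin 2) (e : G.E) : Fin 3 :=
  if e ∈ G.bridgeSet (residual M) then (L e).succ else 0

variable {M : Set G.E} {L : G.E → Fin 2} {v : G.V}

theorem injOn_baseLetter (hM : G.IsMatching M) (hv : LooplessAt v)
    (hcycle : ∀ e ∈ G.star v, e ∉ G.cycleSet (residual M))
    (hL : Set.InjOn L {e ∈ G.bridgeSet (residual M) | v ∈ G.ends e}) :
    Set.InjOn (baseLetter M L) {e ∈ G.star v | ¬ G.IsBridge e} := by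
  have hmemM : ∀ e ∈ G.star v, ¬ G.IsBridge e → e ∉ G.bridgeSet (residual M) → e ∈ M :=
    fun e he hb hpath => by_contra fun heM => hcycle e he ⟨⟨hb, hv e he, heM⟩, hpath⟩
  rintro e ⟨he, hb⟩ e' ⟨he', hb'⟩ heq
  by_cases hpath : e ∈ G.bridgeSet (residual M) <;>
    by_cases hpath' : e' ∈ G.bridgeSet (residual M)
  · simp only [baseLetter, hpath, hpath', if_true] at heq
    exact hL ⟨hpath, mem_star.1 he⟩ ⟨hpath', mem_star.1 he'⟩ (Fin.succ_injective _ heq)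
  · simp [baseLetter, hpath, hpath'] at heq
  · exact absurd heq.symm (by simp [baseLetter, hpath, hpath'])
  · by_contra hne
    exact hM e (hmemM e he hb hpath) e' (hmemM e' he' hb' hpath') hne
      ⟨v, mem_star.1 he, mem_star.1 he'⟩

theorem exists_isLetteredAt (hdeg : G.degree v = 3) (hM : G.IsMatching M)
    (hcard : #{e ∈ G.star v | e ∈ residual M} ≤ 2)
    (hL : Set.InjOn L {e ∈ G.bridgeSet (residual M) | v ∈ G.ends e}) (hv : LooplessAt v) :
    ∃ σ : G.E → Fin 3, (∀ e ∈ G.star v, ¬ G.IsBridge e → σ e = baseLetter M L e) ∧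
      IsLetteredAt (G.cycleSet (residual M)) σ v := by
  have hsub : {e ∈ G.star v | e ∈ G.cycleSet (residual M)} ⊆
      {e ∈ G.star v | e ∈ residual M} := monotone_filter_right _ fun _ _ he => he.1
  have hcases : #{e ∈ G.star v | e ∈ G.cycleSet (residual M)} = 0 ∨
      #{e ∈ G.star v | e ∈ G.cycleSet (residual M)} = 2 := by
    have hne := hv.card_filter_cycleSet_ne_one (residual M)
    have hle := (card_le_card hsub).trans hcard
    omega
  obtain hzero | htwo := hcases
  · have hcycle : ∀ e ∈ G.star v, e ∉ G.cycleSet (residual M) := by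
      simpa [filter_eq_empty_iff] using hzero
    obtain ⟨σ, hσ, hinj⟩ := exists_eqOn_injOn (filter_subset (fun e => ¬ G.IsBridge e) (G.star v))
      (by simpa using injOn_baseLetter hM hv hcycle hL)
      (by rw [hv.card_star, hdeg, Fintype.card_fin])
    exact ⟨σ, fun e he hb => hσ (by simpa [hb] using he), Or.inl ⟨hcycle, hinj⟩⟩
  · have heq := eq_of_subset_of_card_le hsub (by rwa [htwo])
    refine ⟨fun _ => 0, fun e he _ => (if_neg fun hb => ?_).symm,
      Or.inr ⟨htwo, 0, fun _ _ => rfl⟩⟩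
    have hmem : e ∈ ({e ∈ G.star v | e ∈ residual M} : Finset G.E) := mem_filter.2 ⟨he, hb.1⟩
    rw [← heq] at hmem
    exact (mem_filter.1 hmem).2.2 hb

theorem CubicPseudo.exists_forall_isLetteredAt (hG : G.CubicPseudo) :
    ∃ (P : Set G.E) (σ : G.E → Fin 3), ∀ v, LooplessAt v → IsLetteredAt P σ v := by
  obtain ⟨M, hM, hcover⟩ := hG.exists_isMatching_covering_isInner
  have hcard := fun v => card_filter_residual_le_two (hG v).le (hcover v)
  obtain ⟨L, hL⟩ := exists_injOn_bridgeSet (α := Fin 2) (residual M) fun v =>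
    (card_le_card (monotone_filter_right _ fun _ _ he => he.1)).trans (hcard v)
  have hlocal (v : G.V) : ∃ τ : G.E → Fin 3,
      (∀ e ∈ G.star v, ¬ G.IsBridge e → τ e = baseLetter M L e) ∧
        (LooplessAt v → IsLetteredAt (G.cycleSet (residual M)) τ v) := by
    by_cases hv : LooplessAt v
    · obtain ⟨τ, hbase, hτ⟩ := exists_isLetteredAt (hG v) hM (hcard v) (hL v) hv
      exact ⟨τ, hbase, fun _ => hτ⟩
    · exact ⟨baseLetter M L, fun _ _ _ => rfl, fun h => absurd h hv⟩
  choose τ hbase hτ using hlocal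
  obtain ⟨π, σ, hσ⟩ := exists_edge_label_eq_smul (Equiv.Perm (Fin 3)) Set.univ τ
    fun e he u hu w hw => by
      rw [hbase u e (mem_star.2 hu) (mem_cycleSet_univ.1 he),
        hbase w e (mem_star.2 hw) (mem_cycleSet_univ.1 he)]
  exact ⟨_, σ, fun v hv => (hτ v hv).of_eq_perm (π v) fun e he =>
    hσ e (Set.mem_univ e) v (mem_star.1 he)⟩

end Letters

end Multigraph

namespace S4

/-- The central vertex of `S₄`. -/
def center : S4.V := (0 : Fin 4)

/-- The vertices of `S₄` that carry a loop. -/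
def leaf (d : Fin 3) : S4.V := d.succ

/-- The edges `a`, `b`, `c` of `S₄` at its central vertex. -/
def spoke (d : Fin 3) : S4.E := Fin.castAdd 3 d

/-- The loops `a'`, `b'`, `c'` of `S₄`. -/
def rim (d : Fin 3) : S4.E := Fin.natAdd 3 d

theorem cubicPseudo : S4.CubicPseudo := by
  unfold Multigraph.CubicPseudo
  decide

theorem incMultiset_center : S4.incMultiset center = ∑ d, {spoke d} := by
  ext e
  rw [Multigraph.count_incMultiset]
  revert e
  decide

theorem incMultiset_leaf (d : Fin 3) :
    S4.incMultiset (leaf d) = {spoke d} + 2 • {rim d} := by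
  ext e
  rw [Multigraph.count_incMultiset]
  revert d e
  decide

end S4

theorem Multigraph.IsLetteredAt.exists_sum_eq_incMultiset {G : Multigraph} {P : Set G.E}
    {σ : G.E → Fin 3} {v : G.V} (h : IsLetteredAt P σ v) (hv : #(G.star v) = 3) :
    ∃ y, ∑ e ∈ G.star v, {if e ∈ P then S4.rim (σ e) else S4.spoke (σ e)} = S4.incMultiset y := by
  obtain ⟨hP, hσ⟩ | ⟨hP, d, hd⟩ := h
  · refine ⟨S4.center, ?_⟩
    have himage : (G.star v).image σ = univ :=
      eq_univ_of_card _ (by rw [card_image_of_injOn hσ, hv, Fintype.card_fin])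
    rw [S4.incMultiset_center, ← himage, sum_image hσ]
    exact sum_congr rfl fun e he => by rw [if_neg (hP e he)]
  · refine ⟨S4.leaf d, ?_⟩
    have hnP : #{e ∈ G.star v | e ∉ P} = 1 := by
      have := card_filter_add_card_filter_not (s := G.star v) (· ∈ P)
      omega
    calc ∑ e ∈ G.star v, {if e ∈ P then S4.rim (σ e) else S4.spoke (σ e)}
        = ∑ e ∈ G.star v, if e ∈ P then {S4.rim d} else {S4.spoke d} :=
          sum_congr rfl fun e he => by rw [hd e he]; split_ifs <;> rfl
      _ = S4.incMultiset (S4.leaf d) := by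
          rw [sum_ite, sum_const, sum_const, hP, hnP, one_smul, add_comm, S4.incMultiset_leaf]

/-- every cubic pseudo-graph admits an S₄-coloring: ordinary
edges get one color, loops get two colors, and at each vertex the resulting
multiset of three colors is the incidence multiset of some vertex of S₄
(a loop of S₄ counting twice at its vertex). -/
theorem cubic_pseudograph_admits_S4_coloring (G : Multigraph)
    (hG : G.CubicPseudo) :
    ∃ f : G.E → Multiset S4.E,
      (∀ e : G.E, ¬ (G.ends e).IsDiag → Multiset.card (f e) = 1) ∧
      (∀ e : G.E, (G.ends e).IsDiag → Multiset.card (f e) = 2) ∧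
      (∀ x : G.V, ∃ y : S4.V, (∑ e ∈ G.star x, f e) = S4.incMultiset y) := by
  obtain ⟨P, σ, hσ⟩ := hG.exists_forall_isLetteredAt
  exact Multigraph.exists_multiset_coloring_of_looplessAt hG S4.cubicPseudo
    (fun e => if e ∈ P then S4.rim (σ e) else S4.spoke (σ e)) fun x hx =>
      (hσ x hx).exists_sum_eq_incMultiset (hx.card_star.trans (hG x))
end
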